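/- Let G be a connected graph of order n₁ and let n be an integer. If n ≥ 2n₁ ≥ 4 or n > 2n₁ = 2, then pd(G⊙K_{1,n}) = n. -/

import Mathlib

open SimpleGraph

/-- The corona product `G ⊙ H`: one copy of `G`, one copy of `H` for each vertex of `G`,
with the `i`-th vertex of `G` joined to every vertex of the `i`-th copy of `H`. -/
def corona {α β : Type*} (G : SimpleGraph α) (H : SimpleGraph β) :
    SimpleGraph (α ⊕ α × β) :=
  SimpleGraph.fromRel (fun x y =>
    match x, y with
    | Sum.inl a, Sum.inl b => G.Adj a b
    | Sum.inl a, Sum.inr iu => a = iu.1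
    | Sum.inr iu, Sum.inr jw => iu.1 = jw.1 ∧ H.Adj iu.2 jw.2
    | _, _ => False)

/-- The distance from a vertex to a set of vertices: `d(v,A) = min_{u ∈ A} d(v,u)`. -/
noncomputable def setDist {α : Type*} (G : SimpleGraph α) (v : α) (A : Set α) : ℕ :=
  sInf (G.dist v '' A)

/-- `S` is a resolving set for `G`: distinct vertices have distinct metric representations. -/
def IsResolvingSet {α : Type*} (G : SimpleGraph α) (S : Set α) : Prop :=
  ∀ u v : α, (∀ w ∈ S, G.dist u w = G.dist v w) → u = v

/-- The metric dimension of `G`: minimum cardinality of a resolving set. -/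
noncomputable def metricDim {α : Type*} (G : SimpleGraph α) : ℕ :=
  sInf {k | ∃ S : Set α, IsResolvingSet G S ∧ S.ncard = k}

/-- A family of sets is a resolving partition for `G` if it is a partition of the vertex set
into nonempty cells and distinct vertices have distinct partition representations. -/
def IsResolvingPartition {α : Type*} (G : SimpleGraph α) (P : Set (Set α)) : Prop :=
  (∀ A ∈ P, A.Nonempty) ∧ (∀ v : α, ∃! A : Set α, A ∈ P ∧ v ∈ A) ∧
    ∀ u v : α, (∀ A ∈ P, setDist G u A = setDist G v A) → u = v

/-- The partition dimension of `G`: minimum number of cells in a resolving partition. -/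
noncomputable def partitionDim {α : Type*} (G : SimpleGraph α) : ℕ :=
  sInf {t | ∃ P : Set (Set α), IsResolvingPartition G P ∧ P.ncard = t}

/-- `c(H)`: the maximum cardinality of a connected component of `H` which is isomorphic to a
complete graph (i.e. whose vertex set is a clique). -/
noncomputable def maxCompleteComp {β : Type*} (H : SimpleGraph β) : ℕ :=
  sSup {k | ∃ C : H.ConnectedComponent, H.IsClique C.supp ∧ C.supp.ncard = k}

/-- `β(H)`: the number of isolated vertices of `H`. -/
noncomputable def numIsolated {β : Type*} (H : SimpleGraph β) : ℕ :=
  Set.ncard {v : β | ∀ u, ¬ H.Adj v u}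

/-- `α(H)`: the number of connected components of `H` of order greater than one. -/
noncomputable def numBigComp {β : Type*} (H : SimpleGraph β) : ℕ :=
  Set.ncard {C : H.ConnectedComponent | 1 < C.supp.ncard}

/-!
Lower bound: the `n` leaves of one copy of the star have the same neighbors, so no two of them can
lie in one cell of a resolving partition.

Upper bound: as `2 n₁ ≤ n`, the vertices `v` of `G` and the star centers `c_v` can be given
pairwise distinct colors among `n`; in every copy, the `j`-th leaf gets the color `j`. The
color classes form a resolving partition, and already the colors at distance at most one show
this: `v` and `c_v` see all `n` colors, whereas a leaf of color `j` in the copy at `v` sees only `j`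
and the colors of `v` and `c_v`. These are at most three colors, and only two if `n₁ = 1` and `j` is
the color of `v` or `c_v`; as `n ≥ 4`, or `n ≥ 3` and `n₁ = 1`, the leaf misses a color. Two leaves
of the same color `j` at `v ≠ w` are told apart by the color of `v` or `c_v`, whichever is not `j`.
-/

lemma encard_range_le {β γ : Type*} (g : β → γ) : (Set.range g).encard ≤ ENat.card β := by
  rw [← Set.image_univ, ← Set.encard_univ]
  exact Set.encard_image_le g Set.univ

section ResolvingPartition

variable {α : Type*} {C : SimpleGraph α} {P : Set (Set α)}

lemma IsResolvingPartition.partitionDim_eq (hP : IsResolvingPartition C P)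
    (hmin : ∀ Q, IsResolvingPartition C Q → P.ncard ≤ Q.ncard) : partitionDim C = P.ncard := by
  refine IsLeast.csInf_eq ⟨⟨P, hP, rfl⟩, ?_⟩
  rintro _ ⟨Q, hQ, rfl⟩
  exact hmin Q hQ

lemma edist_le_edist_of_neighborSet_subset {u v w : α} (h : C.neighborSet v ⊆ C.neighborSet u)
    (hw : w ≠ v) : C.edist u w ≤ C.edist v w := by
  refine le_iInf fun p => ?_
  cases p with
  | nil => exact absurd rfl hw
  | cons hadj q => exact edist_le (Walk.cons (h hadj) q)

lemma dist_eq_dist_of_neighborSet_eq {u v w : α} (h : C.neighborSet u = C.neighborSet v)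
    (hu : w ≠ u) (hv : w ≠ v) : C.dist u w = C.dist v w :=
  congrArg ENat.toNat <| le_antisymm (edist_le_edist_of_neighborSet_subset h.ge hv)
    (edist_le_edist_of_neighborSet_subset h.le hu)

lemma setDist_eq_zero_of_mem {u : α} {A : Set α} (hu : u ∈ A) : setDist C u A = 0 :=
  Nat.sInf_eq_zero.2 <| Or.inl ⟨u, hu, dist_self⟩

lemma IsResolvingPartition.eq_of_neighborSet_eq (hP : IsResolvingPartition C P) {u v : α}
    (h : C.neighborSet u = C.neighborSet v) {A : Set α} (hA : A ∈ P) (hu : u ∈ A) (hv : v ∈ A) :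
    u = v := by
  obtain ⟨-, hpart, hres⟩ := hP
  refine hres u v fun B hB => ?_
  obtain rfl | hBA := eq_or_ne B A
  · rw [setDist_eq_zero_of_mem hu, setDist_eq_zero_of_mem hv]
  · have huB : u ∉ B := fun hmem => hBA ((hpart u).unique ⟨hB, hmem⟩ ⟨hA, hu⟩)
    have hvB : v ∉ B := fun hmem => hBA ((hpart v).unique ⟨hB, hmem⟩ ⟨hA, hv⟩)
    have himage : C.dist u '' B = C.dist v '' B := Set.image_congr fun w hw =>
      dist_eq_dist_of_neighborSet_eq h (ne_of_mem_of_not_mem hw huB) (ne_of_mem_of_not_mem hw hvB)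
    rw [setDist, setDist, himage]

lemma IsResolvingPartition.encard_le_of_neighborSet_eq (hP : IsResolvingPartition C P) {S : Set α}
    (hS : ∀ u ∈ S, ∀ v ∈ S, C.neighborSet u = C.neighborSet v) : S.encard ≤ P.encard := by
  choose cell hcell hmem using fun v => (hP.2.1 v).exists
  refine Set.encard_le_encard_of_injOn (f := cell) (fun v _ => hcell v) fun u hu v hv huv => ?_
  exact hP.eq_of_neighborSet_eq (hS u hu v hv) (hcell u) (hmem u) (huv ▸ hmem v)

end ResolvingPartition

section NearColors

variable {α κ : Type*} {C : SimpleGraph α}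

lemma mem_of_setDist_eq_zero (hC : C.Connected) {u : α} {A : Set α} (hA : A.Nonempty)
    (h : setDist C u A = 0) : u ∈ A := by
  obtain ⟨w, hw, hdist⟩ := Nat.sInf_mem (hA.image (C.dist u))
  rwa [hC.dist_eq_zero_iff.1 (hdist.trans h)]

lemma setDist_le_one_iff (hC : C.Connected) {u : α} {A : Set α} (hA : A.Nonempty) :
    setDist C u A ≤ 1 ↔ u ∈ A ∨ ∃ w ∈ A, C.Adj u w := by
  constructor
  · intro h
    obtain h0 | h1 := Nat.le_one_iff_eq_zero_or_eq_one.1 h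
    · exact Or.inl (mem_of_setDist_eq_zero hC hA h0)
    · obtain ⟨w, hw, hdist⟩ := Nat.sInf_mem (hA.image (C.dist u))
      exact Or.inr ⟨w, hw, dist_eq_one_iff_adj.1 (hdist.trans h1)⟩
  · rintro (hu | ⟨w, hw, hadj⟩)
    · exact (setDist_eq_zero_of_mem hu).trans_le zero_le_one
    · exact Nat.sInf_le ⟨w, hw, dist_eq_one_iff_adj.2 hadj⟩

/-- The set of colors, under the (not necessarily proper) vertex coloring `col`, that occur in the
closed neighborhood of `u`. It records which color classes are at distance at most one from `u`. -/
def nearColors (C : SimpleGraph α) (col : α → κ) (u : α) : Set κ :=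
  insert (col u) (col '' C.neighborSet u)

lemma mem_nearColors_iff_setDist_le_one (hC : C.Connected) {col : α → κ}
    (hcol : Function.Surjective col) {u : α} {k : κ} :
    k ∈ nearColors C col u ↔ setDist C u (col ⁻¹' {k}) ≤ 1 := by
  rw [setDist_le_one_iff hC (A := col ⁻¹' {k}) (hcol k)]
  simp only [nearColors, Set.mem_insert_iff, Set.mem_image, mem_neighborSet, Set.mem_preimage,
    Set.mem_singleton_iff, eq_comm (a := k), and_comm]

lemma isResolvingPartition_range_fiber (hC : C.Connected) {col : α → κ}
    (hcol : Function.Surjective col)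
    (hsep : ∀ u v, col u = col v → nearColors C col u = nearColors C col v → u = v) :
    IsResolvingPartition C (Set.range fun k => col ⁻¹' {k}) := by
  refine ⟨?_, fun v => ⟨col ⁻¹' {col v}, ⟨⟨_, rfl⟩, rfl⟩, ?_⟩, fun u v huv => ?_⟩
  · rintro _ ⟨k, rfl⟩
    exact hcol k
  · rintro _ ⟨⟨_, rfl⟩, rfl⟩
    rfl
  · have hdist (k : κ) : setDist C u (col ⁻¹' {k}) = setDist C v (col ⁻¹' {k}) := huv _ ⟨k, rfl⟩
    refine hsep u v ?_ ?_
    · exact mem_of_setDist_eq_zero hC (hcol (col v))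
        ((hdist (col v)).trans (setDist_eq_zero_of_mem rfl))
    · ext k
      simp only [mem_nearColors_iff_setDist_le_one hC hcol, hdist]

lemma ncard_range_fiber {col : α → κ} (hcol : Function.Surjective col) :
    (Set.range fun k => col ⁻¹' {k}).ncard = Nat.card κ :=
  Set.ncard_range_of_injective (hcol.preimage_injective.comp Set.singleton_injective)

end NearColors

section Corona

variable {V β : Type*} {G : SimpleGraph V} {H : SimpleGraph β}

lemma corona_adj_inl_inl {a b : V} :
    (corona G H).Adj (Sum.inl a) (Sum.inl b) ↔ G.Adj a b := by
  simp only [corona, fromRel_adj, ne_eq, Sum.inl.injEq, G.adj_comm b a, or_self,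
    and_iff_right_iff_imp]
  exact fun hadj => hadj.ne

lemma corona_adj_inl_inr {a : V} {x : V × β} :
    (corona G H).Adj (Sum.inl a) (Sum.inr x) ↔ a = x.1 := by
  simp [corona]

lemma corona_adj_inr_inr {x y : V × β} :
    (corona G H).Adj (Sum.inr x) (Sum.inr y) ↔ x.1 = y.1 ∧ H.Adj x.2 y.2 := by
  simp only [corona, fromRel_adj, ne_eq, Sum.inr.injEq, eq_comm (a := y.1), H.adj_comm y.2,
    or_self, and_iff_right_iff_imp]
  rintro ⟨-, hadj⟩ rfl
  exact hadj.ne rfl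

lemma corona_connected (hG : G.Connected) : (corona G H).Connected := by
  obtain ⟨v₀⟩ := hG.nonempty
  let φ : G →g corona G H := ⟨Sum.inl, corona_adj_inl_inl.2⟩
  have hbase (a : V) : (corona G H).Reachable (Sum.inl v₀) (Sum.inl a) :=
    (hG.preconnected v₀ a).map φ
  refine (connected_iff_exists_forall_reachable _).2 ⟨Sum.inl v₀, ?_⟩
  rintro (a | ⟨a, b⟩)
  · exact hbase a
  · have hadj : (corona G H).Adj (Sum.inl a) (Sum.inr (a, b)) := corona_adj_inl_inr.2 rfl
    exact (hbase a).trans hadj.reachable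

end Corona

section CoronaStar

variable {V ι : Type*}

/-- The corona product `G ⊙ K_{1,ι}` of `G` with the star whose leaves are indexed by `ι`. -/
abbrev coronaStar (G : SimpleGraph V) (ι : Type*) : SimpleGraph (V ⊕ V × (Fin 1 ⊕ ι)) :=
  corona G (completeBipartiteGraph (Fin 1) ι)

/-- The two vertices of the corona with a star that dominate the copy at `v`: the vertex `v` of `G`
itself, encoded as `hub (v, false)`, and the center of the star, encoded as `hub (v, true)`. -/
def hub : V × Bool → V ⊕ V × (Fin 1 ⊕ ι)
  | (v, false) => Sum.inl v
  | (v, true) => Sum.inr (v, Sum.inl 0)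

/-- The `j`-th leaf of the star attached to `v` in the corona with a star. -/
def leaf (v : V) (j : ι) : V ⊕ V × (Fin 1 ⊕ ι) :=
  Sum.inr (v, Sum.inr j)

/-- The coloring of the corona with a star that colors the hubs by `f` and every leaf by its index.
Its color classes form the resolving partition of the upper bound. -/
def starColoring (f : V × Bool → ι) : V ⊕ V × (Fin 1 ⊕ ι) → ι
  | Sum.inl v => f (v, false)
  | Sum.inr (v, Sum.inl _) => f (v, true)
  | Sum.inr (_, Sum.inr j) => j

lemma leaf_injective (v : V) : Function.Injective (leaf v : ι → _) :=
  Sum.inr_injective.comp <| (Prod.mk_right_injective v).comp Sum.inr_injective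

lemma eq_hub_or_eq_leaf (x : V ⊕ V × (Fin 1 ⊕ ι)) :
    (∃ p, x = hub p) ∨ ∃ v j, x = leaf v j := by
  rcases x with v | ⟨v, i | j⟩
  · exact Or.inl ⟨(v, false), rfl⟩
  · exact Or.inl ⟨(v, true), by rw [Subsingleton.elim i 0, hub]⟩
  · exact Or.inr ⟨v, j, rfl⟩

lemma starColoring_hub (f : V × Bool → ι) (p : V × Bool) : starColoring f (hub p) = f p := by
  rcases p with ⟨v, _ | _⟩ <;> rfl

lemma starColoring_leaf (f : V × Bool → ι) (v : V) (j : ι) : starColoring f (leaf v j) = j :=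
  rfl

lemma starColoring_surjective [Nonempty V] (f : V × Bool → ι) :
    Function.Surjective (starColoring f) :=
  Function.RightInverse.surjective (starColoring_leaf f (Classical.arbitrary V))

variable {G : SimpleGraph V}

lemma coronaStar_neighborSet_leaf (v : V) (j : ι) :
    (coronaStar G ι).neighborSet (leaf v j) = Set.range fun b => hub (v, b) := by
  rw [Bool.range_eq]
  ext (w | ⟨w, i | k⟩)
  · rw [mem_neighborSet, adj_comm, leaf, corona_adj_inl_inr]
    simp [hub]
  · rw [mem_neighborSet, leaf, corona_adj_inr_inr]
    simp [hub, Subsingleton.elim i 0, eq_comm]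
  · rw [mem_neighborSet, leaf, corona_adj_inr_inr]
    simp [hub]

lemma coronaStar_adj_hub_leaf (p : V × Bool) (j : ι) :
    (coronaStar G ι).Adj (hub p) (leaf p.1 j) := by
  rw [adj_comm, ← mem_neighborSet, coronaStar_neighborSet_leaf]
  exact ⟨p.2, rfl⟩

lemma nearColors_hub (f : V × Bool → ι) (p : V × Bool) :
    nearColors (coronaStar G ι) (starColoring f) (hub p) = Set.univ :=
  Set.eq_univ_of_forall fun j => Or.inr ⟨leaf p.1 j, coronaStar_adj_hub_leaf p j, rfl⟩

lemma nearColors_leaf (f : V × Bool → ι) (v : V) (j : ι) :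
    nearColors (coronaStar G ι) (starColoring f) (leaf v j) =
      insert j (Set.range fun b => f (v, b)) := by
  rw [nearColors, starColoring_leaf, coronaStar_neighborSet_leaf, ← Set.range_comp]
  simp only [Function.comp_def, starColoring_hub]

lemma insert_range_ne_univ (f : V × Bool → ι)
    (hι : 4 ≤ ENat.card ι ∨ 3 ≤ ENat.card ι ∧ Subsingleton V) (p : V × Bool) (v : V) :
    insert (f p) (Set.range fun b => f (v, b)) ≠ Set.univ := by
  intro huniv
  have htwo : (Set.range fun b => f (v, b)).encard ≤ 2 :=
    (encard_range_le _).trans_eq (by simp)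
  rw [← Set.encard_univ, ← huniv] at hι
  rcases hι with hfour | ⟨hthree, hV⟩
  · have hle := hfour.trans ((Set.encard_insert_le _ _).trans (add_le_add_left htwo 1))
    exact absurd hle (by decide)
  · have hp : f p ∈ Set.range fun b => f (v, b) := ⟨p.2, by rw [Subsingleton.elim v p.1]⟩
    rw [Set.insert_eq_of_mem hp] at hthree
    exact absurd (hthree.trans htwo) (by decide)

lemma eq_of_insert_range_eq {f : V × Bool → ι} (hf : Function.Injective f) {v w : V} {j : ι}
    (h : insert j (Set.range fun b => f (v, b)) = insert j (Set.range fun b => f (w, b))) :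
    v = w := by
  obtain ⟨b, hb⟩ : ∃ b, f (v, b) ≠ j := by
    by_contra! hall
    simpa using hf ((hall false).trans (hall true).symm)
  have hmem : f (v, b) ∈ insert j (Set.range fun b => f (w, b)) := h ▸ Or.inr ⟨b, rfl⟩
  obtain ⟨b', hb'⟩ := hmem.resolve_left hb
  exact congrArg Prod.fst (hf hb').symm

lemma isResolvingPartition_range_starColoring_fiber (hG : G.Connected) {f : V × Bool → ι}
    (hf : Function.Injective f) (hι : 4 ≤ ENat.card ι ∨ 3 ≤ ENat.card ι ∧ Subsingleton V) :
    IsResolvingPartition (coronaStar G ι) (Set.range fun j => starColoring f ⁻¹' {j}) := by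
  have := hG.nonempty
  refine isResolvingPartition_range_fiber (corona_connected hG) (starColoring_surjective f)
    fun x y hxy hnear => ?_
  rcases eq_hub_or_eq_leaf x with ⟨p, rfl⟩ | ⟨v, j, rfl⟩ <;>
    rcases eq_hub_or_eq_leaf y with ⟨q, rfl⟩ | ⟨w, k, rfl⟩ <;>
    simp only [starColoring_hub, starColoring_leaf] at hxy <;>
    simp only [nearColors_hub, nearColors_leaf] at hnear
  · rw [hf hxy]
  · exact absurd (hxy ▸ hnear).symm (insert_range_ne_univ f hι p w)
  · exact absurd (hxy ▸ hnear) (insert_range_ne_univ f hι q v)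
  · subst hxy
    rw [eq_of_insert_range_eq hf hnear]

lemma IsResolvingPartition.card_le_encard_of_coronaStar [Nonempty V]
    {P : Set (Set (V ⊕ V × (Fin 1 ⊕ ι)))} (hP : IsResolvingPartition (coronaStar G ι) P) :
    ENat.card ι ≤ P.encard := by
  obtain ⟨v⟩ := ‹Nonempty V›
  refine (leaf_injective v).encard_range.trans (hP.encard_le_of_neighborSet_eq ?_)
  rintro _ ⟨j, rfl⟩ _ ⟨k, rfl⟩
  rw [coronaStar_neighborSet_leaf, coronaStar_neighborSet_leaf]

end CoronaStar

/-- Let `G` be a connected graph of order `n₁` and `n` an integer. If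
`n ≥ 2n₁ ≥ 4` or `n > 2n₁ = 2`, then `pd(G⊙K_{1,n}) = n`. -/
theorem stmt7 {V : Type*} [Fintype V] (G : SimpleGraph V) (hG : G.Connected)
    (n₁ n : ℕ) (hn₁ : Fintype.card V = n₁)
    (h : (n ≥ 2 * n₁ ∧ 2 * n₁ ≥ 4) ∨ (n > 2 * n₁ ∧ 2 * n₁ = 2)) :
    partitionDim (corona G (completeBipartiteGraph (Fin 1) (Fin n))) = n := by
  have := hG.nonempty
  have hι : 4 ≤ ENat.card (Fin n) ∨ 3 ≤ ENat.card (Fin n) ∧ Subsingleton V := by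
    simp only [ENat.card_eq_coe_fintype_card, Fintype.card_fin, Nat.ofNat_le_cast,
      ← Fintype.card_le_one_iff_subsingleton]
    omega
  obtain ⟨f⟩ : Nonempty (V × Bool ↪ Fin n) := by
    apply Function.Embedding.nonempty_of_card_le
    simp only [Fintype.card_prod, Fintype.card_bool, Fintype.card_fin]
    omega
  have hcard : (Set.range fun j => starColoring f ⁻¹' {j}).ncard = n :=
    (ncard_range_fiber (starColoring_surjective f)).trans (Nat.card_fin n)
  refine ((isResolvingPartition_range_starColoring_fiber hG f.injective hι).partitionDim_eq
    fun P hP => ?_).trans hcard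
  have hle := hP.card_le_encard_of_coronaStar
  rw [← P.toFinite.cast_ncard_eq, ENat.card_eq_coe_fintype_card, Fintype.card_fin,
    Nat.cast_le] at hle
  exact hcard.trans_le hle
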